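/- Under the hypotheses of the group-velocity identity (m a nonzero integer; b ∈ C³((0,∞)), b > 0; a' = b with a(r) → ∞; b(r) = O(e^{cr}) at infinity; b(r) = O(r^{−γ}) with γ < 3/2 at 0; |(d/dr)^k(1/b)| ≤ C r^{−β−k}, k = 0,…,3, with β < 2|m|−1 at 0; τ(r) = r/b(r), v(r) = r(r⁻¹τ'(r))'; ψ a real normalized twice continuously differentiable solution of −r⁻¹(rψ')' + m²r⁻²ψ + (a+p)²ψ = λψ with ψ = O(r^{|m|}), ψ' = O(r^{|m|−1}) at 0 and super-exponential decay of ψ, ψ' at infinity), assume in addition that b'(r) ≤ 0 and r² b(r) v'(r) ≤ 4m² for all r > 0. Then 2 ∫₀^∞ (a(r)+p) ψ(r)² r dr ≥ 0. -/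

import Mathlib

open MeasureTheory Set Filter Asymptotics

noncomputable section

/-!
Write `T = τ' / r` and `V = m² / r² + (a + p)² - λ`, so that `ψ'' + ψ' / r = V ψ`. The flux
`F = V τ ψ² - τ ψ'² - τ' ψ ψ' + v ψ² / 2` satisfies
`F' = 2 (a + p) ψ² r - (2 m² τ / r³ - v' / 2) ψ² - 2 (τ' - τ / r) ψ'²`, because `b τ = r`. The
condition on `v'` makes the second term nonpositive, and `b' ≤ 0` gives `τ' ≥ τ / r`, so
`F' ≤ 2 (a + p) ψ² r`. It remains to compare the ends. At `0` the power bounds give `F → 0`. At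
infinity the two conditions yield the Euler-type inequality `r (r T')' ≤ 4 m² T`, which forces
polynomial growth of `T` and `τ`, so that every term of `F` except `v ψ² / 2` is bounded below by a
null function. As `v = r T'` and `T ≥ 0`, the function `v` cannot stay below `-1`, since `T` would
decrease at least like `-log r`; hence `limsup F ≥ 0`, which suffices.
-/

open scoped Topology

lemma antitoneOn_of_hasDerivAt_nonpos {D : Set ℝ} (hD : Convex ℝ D) {f f' : ℝ → ℝ}
    (hf : ∀ x ∈ D, HasDerivAt f (f' x) x) (hf' : ∀ x ∈ D, f' x ≤ 0) : AntitoneOn f D :=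
  antitoneOn_of_hasDerivWithinAt_nonpos hD (HasDerivAt.continuousOn hf)
    (fun x hx => (hf x (interior_subset hx)).hasDerivWithinAt)
    (fun x hx => hf' x (interior_subset hx))

lemma isBigO_atTop_of_hasDerivAt {E : Type*} [NormedAddCommGroup E] [NormedSpace ℝ E]
    {f f' : ℝ → E} {h h' : ℝ → ℝ} (hf : ∀ᶠ x in atTop, HasDerivAt f (f' x) x)
    (hh : ∀ᶠ x in atTop, HasDerivAt h (h' x) x) (hh' : ∀ᶠ x in atTop, 0 ≤ h' x)
    (htop : Tendsto h atTop atTop) (hO : f' =O[atTop] h') : f =O[atTop] h := by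
  obtain ⟨C, hC⟩ := hO.bound
  obtain ⟨R, hR⟩ := eventually_atTop.mp (hf.and (hh.and (hh'.and hC)))
  let majorant : ℝ → ℝ := fun x => C * h x + (‖f R‖ - C * h R)
  have hmaj : ∀ x ≥ R, HasDerivAt majorant (C * h' x) x := fun x hx =>
    ((hR x hx).2.1.const_mul C).add_const _
  have norm_le : ∀ x ≥ R, ‖f x‖ ≤ majorant x := fun x hx =>
    image_norm_le_of_norm_deriv_right_le_deriv_boundary'
      (HasDerivAt.continuousOn fun y hy => (hR y hy.1).1)
      (fun y hy => (hR y hy.1).1.hasDerivWithinAt) (by simp [majorant])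
      (HasDerivAt.continuousOn fun y hy => hmaj y hy.1)
      (fun y hy => (hmaj y hy.1).hasDerivWithinAt)
      (fun y hy => by
        obtain ⟨-, -, hpos, hle⟩ := hR y hy.1
        rwa [Real.norm_of_nonneg hpos] at hle)
      (right_mem_Icc.mpr hx)
  have majorant_isBigO : majorant =O[atTop] h :=
    ((isBigO_refl h atTop).const_mul_left C).add
      (isLittleO_const_left.mpr (Or.inr (tendsto_norm_atTop_atTop.comp htop))).isBigO
  exact (IsBigO.of_norm_eventuallyLE ((eventually_ge_atTop R).mono norm_le)).trans majorant_isBigO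

lemma isBigO_exp_mul_of_hasDerivAt {E : Type*} [NormedAddCommGroup E] [NormedSpace ℝ E]
    {f f' : ℝ → E} {c : ℝ} (hc : 0 < c) (hf : ∀ᶠ x in atTop, HasDerivAt f (f' x) x)
    (hO : f' =O[atTop] fun x => Real.exp (c * x)) : f =O[atTop] fun x => Real.exp (c * x) := by
  refine isBigO_atTop_of_hasDerivAt (h' := fun x => Real.exp (c * x) * c) hf
    (.of_forall fun x => by simpa using ((hasDerivAt_id x).const_mul c).exp)
    (.of_forall fun x => by positivity)
    (Real.tendsto_exp_atTop.comp (tendsto_id.const_mul_atTop hc)) ?_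
  simpa only [mul_comm] using hO.const_mul_right hc.ne'

lemma isBigO_inv_nhdsGT_zero_of_hasDerivAt {E : Type*} [NormedAddCommGroup E] [NormedSpace ℝ E]
    {f f' : ℝ → E} (hf : ∀ᶠ r in 𝓝[>] 0, HasDerivAt f (f' r) r)
    (hO : f' =O[𝓝[>] 0] fun r : ℝ => (r ^ 2)⁻¹) : f =O[𝓝[>] 0] fun r : ℝ => r⁻¹ := by
  have inverted : (fun x => f x⁻¹) =O[atTop] fun x : ℝ => x := by
    refine isBigO_atTop_of_hasDerivAt (f' := fun x => (-(x ^ 2)⁻¹) • f' x⁻¹) (h' := fun _ => 1)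
      ?_ (.of_forall hasDerivAt_id) (.of_forall fun _ => zero_le_one) tendsto_id ?_
    · filter_upwards [tendsto_inv_atTop_nhdsGT_zero.eventually hf, eventually_gt_atTop 0]
        with x hx hpos
      exact hx.scomp x (hasDerivAt_inv hpos.ne')
    · have := (isBigO_refl (fun x : ℝ => -(x ^ 2)⁻¹) atTop).smul
        (hO.comp_tendsto tendsto_inv_atTop_nhdsGT_zero)
      refine this.trans (.of_bound 1 ?_)
      filter_upwards [eventually_gt_atTop 0] with x hx
      simp [hx.ne']
  simpa [Function.comp_def] using inverted.comp_tendsto tendsto_inv_nhdsGT_zero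

section RpowAsymptotics

variable {l : Filter ℝ} {f g : ℝ → ℝ} {s t u : ℝ}

lemma isBigO_rpow_mul (hl : ∀ᶠ r in l, 0 < r) (hf : f =O[l] fun r => r ^ s)
    (hg : g =O[l] fun r => r ^ t) (hu : s + t = u) :
    (fun r => f r * g r) =O[l] fun r => r ^ u :=
  (hf.mul hg).congr' .rfl <| hl.mono fun r hr => by
    simp only [← Real.rpow_add hr, hu]

lemma isBigO_id_rpow_one : (fun r : ℝ => r) =O[l] fun r => r ^ (1 : ℝ) := by
  simpa only [Real.rpow_one] using isBigO_refl (fun r : ℝ => r) l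

lemma isBigO_inv_rpow_neg_one : (fun r : ℝ => r⁻¹) =O[l] fun r => r ^ (-1 : ℝ) := by
  simpa only [Real.rpow_neg_one] using isBigO_refl (fun r : ℝ => r⁻¹) l

lemma tendsto_rpow_nhdsGT_zero (hs : 0 < s) :
    Tendsto (fun r : ℝ => r ^ s) (𝓝[>] 0) (𝓝 0) := by
  simpa [Real.zero_rpow hs.ne'] using
    (Real.continuousAt_rpow_const 0 s (Or.inr hs.le)).tendsto.mono_left nhdsWithin_le_nhds

lemma isBigO_const_rpow_nhdsGT_zero (c : ℝ) (hs : s < 0) :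
    (fun _ => c) =O[𝓝[>] (0 : ℝ)] fun r => r ^ s :=
  (isLittleO_const_left.mpr
    (Or.inr (tendsto_norm_atTop_atTop.comp (tendsto_rpow_neg_nhdsGT_zero hs)))).isBigO

lemma isBigO_rpow_nhdsGT_zero_of_le (hst : s ≤ t) :
    (fun r : ℝ => r ^ t) =O[𝓝[>] (0 : ℝ)] fun r => r ^ s := by
  refine .of_bound 1 ?_
  filter_upwards [Ioo_mem_nhdsGT one_pos] with r hr
  rw [one_mul, Real.norm_of_nonneg (Real.rpow_nonneg hr.1.le _),
    Real.norm_of_nonneg (Real.rpow_nonneg hr.1.le _)]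
  exact Real.rpow_le_rpow_of_exponent_ge hr.1 hr.2.le hst

end RpowAsymptotics

lemma isBigO_nhdsGT_of_abs_le_const_mul {f h : ℝ → ℝ} {x C δ : ℝ} (hδ : x < δ)
    (hfh : ∀ r ∈ Ioo x δ, |f r| ≤ C * h r) : f =O[𝓝[>] x] h := by
  refine .of_bound |C| ?_
  filter_upwards [Ioo_mem_nhdsGT hδ] with r hr
  calc ‖f r‖ ≤ C * h r := hfh r hr
    _ ≤ ‖C * h r‖ := Real.le_norm_self _
    _ = |C| * ‖h r‖ := by rw [norm_mul, Real.norm_eq_abs]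

lemma isBigO_exp_neg_mul_of_tendsto {f : ℝ → ℝ} {N : ℝ}
    (hf : Tendsto (fun r => Real.exp (N * r) * f r) atTop (𝓝 0)) :
    f =O[atTop] fun r => Real.exp (-N * r) := by
  refine ((hf.isBigO_one ℝ).mul (isBigO_refl (fun r => Real.exp (-N * r)) atTop)).congr
    (fun r => ?_) (fun r => one_mul _)
  rw [mul_right_comm, ← Real.exp_add]
  simp

lemma integrableOn_Ioi_of_isBigO_one_of_isBigO_exp_neg {f : ℝ → ℝ} {x c : ℝ} (hc : 0 < c)
    (hcont : ContinuousOn f (Ioi x)) (hx : f =O[𝓝[>] x] fun _ => (1 : ℝ))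
    (htop : f =O[atTop] fun r => Real.exp (-c * r)) : IntegrableOn f (Ioi x) := by
  refine integrableOn_Ioi_iff_integrableAtFilter_atTop_nhdsWithin.mpr ⟨?_, ?_, ?_⟩
  · exact ⟨Ioi (x + 1), Ioi_mem_atTop _,
      integrable_of_isBigO_exp_neg hc (hcont.mono fun r hr => by
        have : x + 1 ≤ r := hr
        exact mem_Ioi.mpr (by linarith)) htop⟩
  · exact hx.integrableAtFilter
      ⟨Ioi x, self_mem_nhdsWithin, hcont.aestronglyMeasurable measurableSet_Ioi⟩
      ⟨Ioo x (x + 1), Ioo_mem_nhdsGT (lt_add_one x), integrableOn_const (by simp)⟩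
  · exact hcont.locallyIntegrableOn measurableSet_Ioi

lemma tendsto_intervalIntegral_nhdsGT_zero {f : ℝ → ℝ} {x : ℝ} (hf : IntegrableOn f (Ioi x)) :
    Tendsto (fun r => ∫ y in x..r, f y) (𝓝[>] x) (𝓝 0) := by
  have hcont : ContinuousWithinAt (fun r => ∫ y in x..r, f y) (Icc x (x + 1)) x :=
    intervalIntegral.continuousWithinAt_primitive (by simp)
      (intervalIntegrable_iff.mpr (hf.mono_set fun y hy => by simpa using hy.1))
  have := hcont.tendsto.mono_left (nhdsWithin_mono x Ioc_subset_Icc_self)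
  rwa [nhdsWithin_Ioc_eq_nhdsGT (lt_add_one x), intervalIntegral.integral_same] at this

lemma sub_le_integral_Ioi_of_hasDerivAt_of_le {F F' f ρ : ℝ → ℝ} {x A B : ℝ}
    (hF : ∀ r > x, HasDerivAt F (F' r) r) (hle : ∀ r > x, F' r ≤ f r)
    (hf : IntegrableOn f (Ioi x)) (hA : Tendsto F (𝓝[>] x) (𝓝 A))
    (hB : Tendsto ρ atTop (𝓝 B)) (hρ : ∃ᶠ r in atTop, ρ r ≤ F r) :
    B - A ≤ ∫ r in Ioi x, f r := by
  have hInt : ∀ {r s : ℝ}, x ≤ r → x ≤ s → IntervalIntegrable f volume r s := fun hr hs =>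
    intervalIntegrable_iff.mpr (hf.mono_set fun y hy => (le_min hr hs).trans_lt hy.1)
  let P : ℝ → ℝ := fun r => ∫ y in x..r, f y
  have hP_zero : Tendsto P (𝓝[>] x) (𝓝 0) := tendsto_intervalIntegral_nhdsGT_zero hf
  have hP_top : Tendsto P atTop (𝓝 (∫ r in Ioi x, f r)) :=
    intervalIntegral_tendsto_integral_Ioi x hf tendsto_id
  have sub_antitone : ∀ r > x, ∀ s ≥ r, F s - P s ≤ F r - P r := by
    intro r hr s hs
    have hFs : F s - F r ≤ ∫ y in r..s, f y :=
      intervalIntegral.sub_le_integral_of_hasDeriv_right_of_le hs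
        (HasDerivAt.continuousOn fun y hy => hF y (hr.trans_le hy.1))
        (fun y hy => (hF y (hr.trans hy.1)).hasDerivWithinAt)
        (intervalIntegrable_iff_integrableOn_Icc_of_le hs |>.mp
          (hInt hr.le (hr.le.trans hs)))
        (fun y hy => hle y (hr.trans hy.1))
    have hPs : P r + ∫ y in r..s, f y = P s :=
      intervalIntegral.integral_add_adjacent_intervals (hInt le_rfl hr.le)
        (hInt hr.le (hr.le.trans hs))
    linarith
  have le_left_limit : ∀ s > x, F s - P s ≤ A := by
    intro s hs
    refine ge_of_tendsto (by simpa using hA.sub hP_zero) ?_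
    filter_upwards [Ioo_mem_nhdsGT hs] with r hr
    exact sub_antitone r hr.1 s hr.2.le
  have : B - ∫ r in Ioi x, f r ≤ A := by
    refine le_of_tendsto_of_frequently (hB.sub hP_top) ?_
    refine (hρ.and_eventually (eventually_gt_atTop x)).mono fun s ⟨hs, hxs⟩ => ?_
    exact (sub_le_sub_right hs _).trans (le_left_limit s hxs)
  linarith

section EulerInequality

variable {T v v' : ℝ → ℝ} {κ c C : ℝ}

lemma antitoneOn_rpow_neg_mul_of_euler_inequality
    (hT : ∀ r > 0, HasDerivAt T (v r / r) r) (hv : ∀ r > 0, HasDerivAt v (v' r) r)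
    (hvT : ∀ r > 0, v' r ≤ κ ^ 2 * T r / r) :
    AntitoneOn (fun r => r ^ (-κ) * (v r + κ * T r)) (Ioi 0) := by
  refine antitoneOn_of_hasDerivAt_nonpos (convex_Ioi 0)
    (f' := fun r => r ^ (-κ) * (v' r - κ ^ 2 * T r / r)) (fun r hr => ?_) (fun r hr => ?_)
  · have hr0 : 0 < r := hr
    refine ((Real.hasDerivAt_rpow_const (Or.inl hr0.ne')).mul
      ((hv r hr).add ((hT r hr).const_mul κ))).congr_deriv ?_
    rw [Real.rpow_sub_one hr0.ne', Pi.add_apply]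
    field_simp
    ring
  · exact mul_nonpos_of_nonneg_of_nonpos (Real.rpow_nonneg (le_of_lt hr) _)
      (sub_nonpos.mpr (hvT r hr))

lemma add_mul_le_rpow_of_euler_inequality
    (hT : ∀ r > 0, HasDerivAt T (v r / r) r) (hv : ∀ r > 0, HasDerivAt v (v' r) r)
    (hvT : ∀ r > 0, v' r ≤ κ ^ 2 * T r / r) {r : ℝ} (hr : 1 ≤ r) :
    v r + κ * T r ≤ (v 1 + κ * T 1) * r ^ κ := by
  have hr0 : 0 < r := one_pos.trans_le hr
  have hle := antitoneOn_rpow_neg_mul_of_euler_inequality hT hv hvT (mem_Ioi.mpr one_pos)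
    (mem_Ioi.mpr hr0) hr
  simp only [Real.one_rpow, one_mul] at hle
  rwa [Real.rpow_neg hr0.le, inv_mul_le_iff₀' (Real.rpow_pos_of_pos hr0 κ)] at hle

lemma le_mul_rpow_of_add_mul_le (hκ : 0 < κ) (hC : 0 ≤ C)
    (hT : ∀ r > 0, HasDerivAt T (v r / r) r) (hT1 : 0 ≤ T 1)
    (hvT : ∀ r ≥ 1, v r + κ * T r ≤ C * r ^ κ) {r : ℝ} (hr : 1 ≤ r) :
    T r ≤ (T 1 + C / (2 * κ)) * r ^ κ := by
  have antitone : AntitoneOn (fun r => r ^ κ * T r - C / (2 * κ) * r ^ (2 * κ)) (Ici 1) := by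
    refine antitoneOn_of_hasDerivAt_nonpos (convex_Ici 1)
      (f' := fun r => r ^ κ / r * (v r + κ * T r - C * r ^ κ)) (fun r hr => ?_) (fun r hr => ?_)
    · have hr0 : 0 < r := one_pos.trans_le hr
      refine (((Real.hasDerivAt_rpow_const (Or.inl hr0.ne')).mul (hT r hr0)).sub
        ((Real.hasDerivAt_rpow_const (Or.inl hr0.ne')).const_mul (C / (2 * κ)))).congr_deriv ?_
      rw [Real.rpow_sub_one hr0.ne', Real.rpow_sub_one hr0.ne', two_mul κ, Real.rpow_add hr0]
      field_simp
      ring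
    · have hr0 : 0 < r := one_pos.trans_le hr
      exact mul_nonpos_of_nonneg_of_nonpos (by positivity) (sub_nonpos.mpr (hvT r hr))
  have hr0 : 0 < r := one_pos.trans_le hr
  have hle : r ^ κ * T r - C / (2 * κ) * r ^ (2 * κ) ≤ T 1 - C / (2 * κ) := by
    simpa using antitone self_mem_Ici hr hr
  have hpow : 1 ≤ r ^ (2 * κ) := Real.one_le_rpow hr (by positivity)
  refine le_of_mul_le_mul_left ?_ (Real.rpow_pos_of_pos hr0 κ)
  calc r ^ κ * T r ≤ T 1 + C / (2 * κ) * r ^ (2 * κ) := by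
        linarith [show 0 ≤ C / (2 * κ) by positivity]
    _ ≤ T 1 * r ^ (2 * κ) + C / (2 * κ) * r ^ (2 * κ) := by
        gcongr
        exact le_mul_of_one_le_right hT1 hpow
    _ = r ^ κ * ((T 1 + C / (2 * κ)) * r ^ κ) := by
        rw [two_mul κ, Real.rpow_add hr0]
        ring

lemma isBigO_rpow_of_euler_inequality (hκ : 0 < κ)
    (hT : ∀ r > 0, HasDerivAt T (v r / r) r) (hv : ∀ r > 0, HasDerivAt v (v' r) r)
    (hT_nonneg : ∀ r > 0, 0 ≤ T r) (hvT : ∀ r > 0, v' r ≤ κ ^ 2 * T r / r) :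
    T =O[atTop] fun r => r ^ κ := by
  have add_mul_le : ∀ r ≥ 1, v r + κ * T r ≤ |v 1 + κ * T 1| * r ^ κ := fun r hr =>
    (add_mul_le_rpow_of_euler_inequality hT hv hvT hr).trans (by gcongr; exact le_abs_self _)
  refine .of_bound (T 1 + |v 1 + κ * T 1| / (2 * κ)) ?_
  filter_upwards [eventually_ge_atTop 1] with r hr
  rw [Real.norm_of_nonneg (hT_nonneg r (by positivity)), Real.norm_of_nonneg (by positivity)]
  exact le_mul_rpow_of_add_mul_le hκ (abs_nonneg _) hT (hT_nonneg 1 one_pos) add_mul_le hr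

lemma frequently_le_of_hasDerivAt_div_id (hc : c < 0)
    (hT : ∀ r > 0, HasDerivAt T (v r / r) r) (hT_nonneg : ∀ r > 0, 0 ≤ T r) :
    ∃ᶠ r in atTop, c ≤ v r := by
  intro hlt
  obtain ⟨R, hR⟩ := eventually_atTop.mp (hlt.and (eventually_gt_atTop 0))
  have antitone : AntitoneOn (fun r => T r - c * Real.log r) (Ici R) := by
    refine antitoneOn_of_hasDerivAt_nonpos (convex_Ici R) (f' := fun r => v r / r - c * r⁻¹)
      (fun r hr => (hT r (hR r hr).2).sub ((Real.hasDerivAt_log (hR r hr).2.ne').const_mul c))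
      (fun r hr => ?_)
    obtain ⟨hvc, hr0⟩ := hR r hr
    rw [← div_eq_mul_inv, ← sub_div]
    exact div_nonpos_of_nonpos_of_nonneg (by linarith) hr0.le
  have hlog : Tendsto (fun r => -c * Real.log r) atTop atTop :=
    Real.tendsto_log_atTop.const_mul_atTop (neg_pos.mpr hc)
  obtain ⟨r, hlarge, hr⟩ := ((hlog.eventually_gt_atTop (T R - c * Real.log R)).and
    (eventually_ge_atTop R)).exists
  have := antitone self_mem_Ici hr hr
  simp only at this
  linarith [hT_nonneg r (hR r hr).2]

end EulerInequality

/-- The slope `τ'(r) / r` of a radial weight `τ`, i.e. the derivative of `τ` with respect to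
`r² / 2`. -/
def radialSlope (τ : ℝ → ℝ) (r : ℝ) : ℝ := r⁻¹ * deriv τ r

/-- The function `v = r (r⁻¹ τ')'` attached to a radial weight `τ`. -/
def radialCurvature (τ : ℝ → ℝ) (r : ℝ) : ℝ := r * deriv (radialSlope τ) r

section RadialWeight

variable {τ : ℝ → ℝ} {r : ℝ}

lemma hasDerivAt_mul_radialSlope (hτ : DifferentiableAt ℝ τ r) (hr : r ≠ 0) :
    HasDerivAt τ (r * radialSlope τ r) r := by
  simpa [radialSlope, hr] using hτ.hasDerivAt

lemma hasDerivAt_radialSlope (hτ : DifferentiableAt ℝ (radialSlope τ) r) (hr : r ≠ 0) :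
    HasDerivAt (radialSlope τ) (radialCurvature τ r / r) r := by
  simpa [radialCurvature, hr] using hτ.hasDerivAt

lemma contDiffOn_radialSlope {n : WithTop ℕ∞} (hτ : ContDiffOn ℝ (n + 1) τ (Ioi 0)) :
    ContDiffOn ℝ n (radialSlope τ) (Ioi 0) :=
  (contDiffOn_id.inv fun _ hr => (ne_of_gt hr)).mul (hτ.deriv_of_isOpen isOpen_Ioi le_rfl)

lemma contDiffOn_radialCurvature {n : WithTop ℕ∞} (hτ : ContDiffOn ℝ (n + 1 + 1) τ (Ioi 0)) :
    ContDiffOn ℝ n (radialCurvature τ) (Ioi 0) :=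
  contDiffOn_id.mul ((contDiffOn_radialSlope hτ).deriv_of_isOpen isOpen_Ioi le_rfl)

end RadialWeight

section RadialWeightMulId

variable {g : ℝ → ℝ} {r : ℝ}

lemma radialSlope_id_mul (hg : DifferentiableAt ℝ g r) (hr : r ≠ 0) :
    radialSlope (fun s => s * g s) r = r⁻¹ * g r + deriv g r := by
  rw [radialSlope, deriv_fun_mul differentiableAt_fun_id hg, deriv_id'', one_mul]
  field_simp

lemma radialCurvature_id_mul (hg : ∀ᶠ s in 𝓝 r, DifferentiableAt ℝ g s)
    (hg' : DifferentiableAt ℝ (deriv g) r) (hr : r ≠ 0) :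
    radialCurvature (fun s => s * g s) r = r * deriv (deriv g) r + deriv g r - r⁻¹ * g r := by
  have slope_eq : radialSlope (fun s => s * g s) =ᶠ[𝓝 r] fun s => s⁻¹ * g s + deriv g s := by
    filter_upwards [hg, isOpen_ne.mem_nhds hr] with s hs hs0
    exact radialSlope_id_mul hs hs0
  have hderiv : HasDerivAt (fun s => s⁻¹ * g s + deriv g s) _ r :=
    ((hasDerivAt_inv hr).mul hg.self_of_nhds.hasDerivAt).add hg'.hasDerivAt
  rw [radialCurvature, slope_eq.deriv_eq, hderiv.deriv]
  field_simp
  ring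

end RadialWeightMulId

/-- The flux `V τ ψ² - τ ψ'² - τ' ψ ψ' + v ψ² / 2` obtained by multiplying the radial equation
`ψ'' + ψ' / r = V ψ` by `τ ψ'`; here `τ' = r * radialSlope τ` and `v = radialCurvature τ`. -/
def virialFlux (V τ ψ : ℝ → ℝ) (r : ℝ) : ℝ :=
  V r * τ r * ψ r ^ 2 - τ r * deriv ψ r ^ 2 - r * radialSlope τ r * (ψ r * deriv ψ r)
    + radialCurvature τ r / 2 * ψ r ^ 2

section VirialFlux

variable {V τ ψ : ℝ → ℝ} {r V' β μ σ c lam : ℝ}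

lemma hasDerivAt_virialFlux (hr : r ≠ 0) (hV : HasDerivAt V V' r) (hτ : DifferentiableAt ℝ τ r)
    (hslope : DifferentiableAt ℝ (radialSlope τ) r)
    (hcurv : DifferentiableAt ℝ (radialCurvature τ) r) (hψ : DifferentiableAt ℝ ψ r)
    (hψ' : HasDerivAt (deriv ψ) (V r * ψ r - r⁻¹ * deriv ψ r) r) :
    HasDerivAt (virialFlux V τ ψ)
      (V' * τ r * ψ r ^ 2 + deriv (radialCurvature τ) r / 2 * ψ r ^ 2
        - 2 * (r * radialSlope τ r - r⁻¹ * τ r) * deriv ψ r ^ 2) r := by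
  have dτ := hasDerivAt_mul_radialSlope hτ hr
  have dT := hasDerivAt_radialSlope hslope hr
  have dψ := hψ.hasDerivAt
  refine (((((hV.mul dτ).mul (dψ.pow 2)).sub (dτ.mul (hψ'.pow 2))).sub
    (((hasDerivAt_id r).mul dT).mul (dψ.mul hψ'))).add
    ((hcurv.hasDerivAt.div_const 2).mul (dψ.pow 2))).congr_deriv ?_
  simp only [id_def, Pi.mul_apply, Pi.pow_apply]
  field_simp
  ring

lemma tendsto_virialFlux_nhdsGT_zero (hβ : β < 2 * μ - 1)
    (hV : V =O[𝓝[>] 0] fun r => r ^ (-2 : ℝ)) (hτ : τ =O[𝓝[>] 0] fun r => r ^ (1 - β))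
    (hslope : radialSlope τ =O[𝓝[>] 0] fun r => r ^ (-β - 1))
    (hcurv : radialCurvature τ =O[𝓝[>] 0] fun r => r ^ (-β - 1))
    (hψ : ψ =O[𝓝[>] 0] fun r => r ^ μ) (hψ' : deriv ψ =O[𝓝[>] 0] fun r => r ^ (μ - 1)) :
    Tendsto (virialFlux V τ ψ) (𝓝[>] 0) (𝓝 0) := by
  have hpos : ∀ᶠ r : ℝ in 𝓝[>] 0, 0 < r := self_mem_nhdsWithin
  have hψψ : (fun r => ψ r ^ 2) =O[𝓝[>] 0] fun r => r ^ (2 * μ) := by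
    simpa only [sq] using isBigO_rpow_mul hpos hψ hψ (two_mul μ).symm
  have hψ'ψ' : (fun r => deriv ψ r ^ 2) =O[𝓝[>] 0] fun r => r ^ (2 * μ - 2) := by
    simpa only [sq] using isBigO_rpow_mul hpos hψ' hψ' (by ring)
  have potential_term := isBigO_rpow_mul hpos (isBigO_rpow_mul hpos hV hτ rfl) hψψ
    (show _ = 2 * μ - 1 - β by ring)
  have kinetic_term := isBigO_rpow_mul hpos hτ hψ'ψ' (show _ = 2 * μ - 1 - β by ring)
  have slope_term := isBigO_rpow_mul hpos (isBigO_rpow_mul hpos isBigO_id_rpow_one hslope rfl)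
    (isBigO_rpow_mul hpos hψ hψ' rfl) (show _ = 2 * μ - 1 - β by ring)
  have curvature_term := isBigO_rpow_mul hpos (hcurv.const_mul_left 2⁻¹) hψψ
    (show _ = 2 * μ - 1 - β by ring)
  have hflux := ((potential_term.sub kinetic_term).sub slope_term).add curvature_term
  refine (hflux.congr_left fun r => ?_).trans_tendsto (tendsto_rpow_nhdsGT_zero (by linarith))
  rw [virialFlux, div_eq_inv_mul]

/- Only a lower bound along a sequence is available, as `radialCurvature τ` may be very negative
at infinity. -/
lemma exists_tendsto_zero_frequently_le_virialFlux (hσ : 0 < σ)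
    (hV : ∀ᶠ r in atTop, -lam ≤ V r) (hτ_nonneg : ∀ᶠ r in atTop, 0 ≤ τ r)
    (hτ : τ =O[atTop] fun r => r ^ σ) (hslope : radialSlope τ =O[atTop] fun r => r ^ (σ - 2))
    (hcurv : ∃ᶠ r in atTop, c ≤ radialCurvature τ r) (hψ : ψ =O[atTop] fun r => r ^ (-σ))
    (hψ' : deriv ψ =O[atTop] fun r => r ^ (-σ)) :
    ∃ ρ : ℝ → ℝ, Tendsto ρ atTop (𝓝 0) ∧ ∃ᶠ r in atTop, ρ r ≤ virialFlux V τ ψ r := by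
  have hpos : ∀ᶠ r : ℝ in atTop, 0 < r := eventually_gt_atTop 0
  have hlim := tendsto_rpow_neg_atTop hσ
  have hψ_zero : Tendsto ψ atTop (𝓝 0) := hψ.trans_tendsto hlim
  have hτψψ := (isBigO_rpow_mul hpos hτ (isBigO_rpow_mul hpos hψ hψ rfl)
    (show _ = -σ by ring)).trans_tendsto hlim
  have hτψ'ψ' := (isBigO_rpow_mul hpos hτ (isBigO_rpow_mul hpos hψ' hψ' rfl)
    (show _ = -σ by ring)).trans_tendsto hlim
  have hslopeψψ' := (isBigO_rpow_mul hpos (isBigO_rpow_mul hpos isBigO_id_rpow_one hslope rfl)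
    (isBigO_rpow_mul hpos hψ hψ' rfl) (show _ = -(σ + 1) by ring)).trans_tendsto
    (tendsto_rpow_neg_atTop (by positivity))
  refine ⟨_, (((hτψψ.const_mul (-lam)).sub hτψ'ψ').sub hslopeψψ').add
    ((hψ_zero.pow 2).const_mul (c / 2)) |>.trans (by simp), ?_⟩
  refine (hcurv.and_eventually (hV.and hτ_nonneg)).mono fun r ⟨hc, hVr, hτr⟩ => ?_
  have hpot : -lam * (τ r * ψ r ^ 2) ≤ V r * (τ r * ψ r ^ 2) := by gcongr
  have hcur : c / 2 * ψ r ^ 2 ≤ radialCurvature τ r / 2 * ψ r ^ 2 := by gcongr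
  rw [virialFlux]
  linarith

end VirialFlux

/-- The potential `m² / r² + (a + p)² - λ` for which the eigenvalue equation of the fiber operator
reads `ψ'' + ψ' / r = V ψ`. -/
def effectivePotential (m p lam : ℝ) (a : ℝ → ℝ) (r : ℝ) : ℝ :=
  m ^ 2 * r⁻¹ ^ 2 + (a r + p) ^ 2 - lam

section EffectivePotential

variable {m p lam r : ℝ} {a ψ : ℝ → ℝ}

lemma neg_le_effectivePotential : -lam ≤ effectivePotential m p lam a r := by
  have : 0 ≤ m ^ 2 * r⁻¹ ^ 2 + (a r + p) ^ 2 := by positivity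
  rw [effectivePotential]
  linarith

lemma hasDerivAt_effectivePotential {b : ℝ} (hr : r ≠ 0) (ha : HasDerivAt a b r) :
    HasDerivAt (effectivePotential m p lam a) (2 * (a r + p) * b - 2 * m ^ 2 * r⁻¹ ^ 3) r := by
  refine (((((hasDerivAt_inv hr).pow 2).const_mul (m ^ 2)).add ((ha.add_const p).pow 2)).sub_const
    lam).congr_deriv ?_
  norm_num
  field_simp
  ring

lemma isBigO_effectivePotential_nhdsGT_zero
    (ha : (fun r => a r + p) =O[𝓝[>] 0] fun r => r ^ (-1 : ℝ)) :
    effectivePotential m p lam a =O[𝓝[>] 0] fun r => r ^ (-2 : ℝ) := by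
  have hpos : ∀ᶠ r : ℝ in 𝓝[>] 0, 0 < r := self_mem_nhdsWithin
  have centrifugal : (fun r : ℝ => r⁻¹ ^ 2) =O[𝓝[>] 0] fun r => r ^ (-2 : ℝ) := by
    simpa only [sq] using
      isBigO_rpow_mul hpos isBigO_inv_rpow_neg_one isBigO_inv_rpow_neg_one (by norm_num)
  have magnetic : (fun r => (a r + p) ^ 2) =O[𝓝[>] 0] fun r => r ^ (-2 : ℝ) := by
    simpa only [sq] using isBigO_rpow_mul hpos ha ha (by norm_num)
  exact ((centrifugal.const_mul_left (m ^ 2)).add magnetic).sub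
    (isBigO_const_rpow_nhdsGT_zero lam (by norm_num))

lemma hasDerivAt_deriv_of_eigenvalue_equation (hr : r ≠ 0) (hψ' : DifferentiableAt ℝ (deriv ψ) r)
    (heq : -r⁻¹ * deriv (fun s => s * deriv ψ s) r + m ^ 2 * r⁻¹ ^ 2 * ψ r + (a r + p) ^ 2 * ψ r
      = lam * ψ r) :
    HasDerivAt (deriv ψ) (effectivePotential m p lam a r * ψ r - r⁻¹ * deriv ψ r) r := by
  refine hψ'.hasDerivAt.congr_deriv ?_
  have hcancel : r⁻¹ * (r * deriv (deriv ψ) r) = deriv (deriv ψ) r := inv_mul_cancel_left₀ hr _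
  rw [deriv_fun_mul differentiableAt_fun_id hψ', deriv_id'', one_mul] at heq
  rw [effectivePotential]
  linarith

end EffectivePotential

section RadialWeightBounds

variable {g τ : ℝ → ℝ} {r β κ : ℝ}

lemma isBigO_radialSlope_id_mul_nhdsGT_zero (hg : DifferentiableOn ℝ g (Ioi 0))
    (hg0 : g =O[𝓝[>] 0] fun r => r ^ (-β)) (hg1 : deriv g =O[𝓝[>] 0] fun r => r ^ (-β - 1)) :
    radialSlope (fun s => s * g s) =O[𝓝[>] 0] fun r => r ^ (-β - 1) := by
  have hpos : ∀ᶠ r : ℝ in 𝓝[>] 0, 0 < r := self_mem_nhdsWithin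
  refine ((isBigO_rpow_mul hpos isBigO_inv_rpow_neg_one hg0
    (show _ = -β - 1 by ring)).add hg1).congr' ?_ .rfl
  filter_upwards [hpos] with r hr
  exact (radialSlope_id_mul (hg.differentiableAt (Ioi_mem_nhds hr)) hr.ne').symm

lemma isBigO_radialCurvature_id_mul_nhdsGT_zero (hg : ContDiffOn ℝ 2 g (Ioi 0))
    (hg0 : g =O[𝓝[>] 0] fun r => r ^ (-β)) (hg1 : deriv g =O[𝓝[>] 0] fun r => r ^ (-β - 1))
    (hg2 : deriv (deriv g) =O[𝓝[>] 0] fun r => r ^ (-β - 2)) :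
    radialCurvature (fun s => s * g s) =O[𝓝[>] 0] fun r => r ^ (-β - 1) := by
  have hpos : ∀ᶠ r : ℝ in 𝓝[>] 0, 0 < r := self_mem_nhdsWithin
  have hdiff : DifferentiableOn ℝ g (Ioi 0) := hg.differentiableOn two_ne_zero
  have hdiff' : DifferentiableOn ℝ (deriv g) (Ioi 0) :=
    (hg.deriv_of_isOpen isOpen_Ioi (m := 1) (by norm_num)).differentiableOn one_ne_zero
  refine (((isBigO_rpow_mul hpos isBigO_id_rpow_one hg2 (show _ = -β - 1 by ring)).add hg1).sub
    (isBigO_rpow_mul hpos isBigO_inv_rpow_neg_one hg0 (show _ = -β - 1 by ring))).congr' ?_ .rfl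
  filter_upwards [hpos] with r hr
  refine (radialCurvature_id_mul ?_ (hdiff'.differentiableAt (Ioi_mem_nhds hr)) hr.ne').symm
  filter_upwards [Ioi_mem_nhds hr] with s hs
  exact hdiff.differentiableAt (Ioi_mem_nhds hs)

lemma id_mul_le_sq_mul_radialSlope_id_mul (hr : r ≠ 0) (hg : DifferentiableAt ℝ g r)
    (hg' : 0 ≤ deriv g r) : r * g r ≤ r ^ 2 * radialSlope (fun s => s * g s) r := by
  rw [radialSlope_id_mul hg hr]
  calc r * g r ≤ r * g r + r ^ 2 * deriv g r := le_add_of_nonneg_right (by positivity)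
    _ = r ^ 2 * (r⁻¹ * g r + deriv g r) := by field_simp

lemma id_mul_inv_le_sq_mul_radialSlope {b : ℝ → ℝ} (hr : r ≠ 0) (hb : DifferentiableAt ℝ b r)
    (hb0 : b r ≠ 0) (hb' : deriv b r ≤ 0) :
    r * (b r)⁻¹ ≤ r ^ 2 * radialSlope (fun s => s * (b s)⁻¹) r := by
  refine id_mul_le_sq_mul_radialSlope_id_mul hr (hb.fun_inv hb0) ?_
  rw [deriv_fun_inv'' hb hb0]
  exact div_nonneg (neg_nonneg.mpr hb') (sq_nonneg _)

lemma radialSlope_nonneg_of_le_sq_mul (hr : r ≠ 0) (hτ : 0 ≤ τ r)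
    (hle : τ r ≤ r ^ 2 * radialSlope τ r) : 0 ≤ radialSlope τ r :=
  nonneg_of_mul_nonneg_right (hτ.trans hle) (by positivity)

/- The curvature bound `r³ v' ≤ κ² τ` and `τ ≤ r² T` combine to the Euler inequality
`r (r T')' ≤ κ² T` for `T = radialSlope τ`. -/
lemma isBigO_radialSlope_atTop (hκ : 0 < κ) (hτ : ContDiffOn ℝ 3 τ (Ioi 0))
    (hτ_nonneg : ∀ r > 0, 0 ≤ τ r) (hle : ∀ r > 0, τ r ≤ r ^ 2 * radialSlope τ r)
    (hcurv : ∀ r > 0, r ^ 3 * deriv (radialCurvature τ) r ≤ κ ^ 2 * τ r) :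
    radialSlope τ =O[atTop] fun r => r ^ κ := by
  have hslope : DifferentiableOn ℝ (radialSlope τ) (Ioi 0) :=
    (contDiffOn_radialSlope (n := 2) (hτ.of_le (by norm_num))).differentiableOn two_ne_zero
  have hcurvature : DifferentiableOn ℝ (radialCurvature τ) (Ioi 0) :=
    (contDiffOn_radialCurvature (n := 1) (hτ.of_le (by norm_num))).differentiableOn one_ne_zero
  refine isBigO_rpow_of_euler_inequality hκ
    (fun r hr => hasDerivAt_radialSlope (hslope.differentiableAt (Ioi_mem_nhds hr)) hr.ne')
    (fun r hr => (hcurvature.differentiableAt (Ioi_mem_nhds hr)).hasDerivAt)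
    (fun r hr => radialSlope_nonneg_of_le_sq_mul hr.ne' (hτ_nonneg r hr) (hle r hr))
    (fun r hr => ?_)
  have hr3 : 0 < r ^ 3 := pow_pos hr 3
  refine le_of_mul_le_mul_left ?_ hr3
  calc r ^ 3 * deriv (radialCurvature τ) r ≤ κ ^ 2 * τ r := hcurv r hr
    _ ≤ κ ^ 2 * (r ^ 2 * radialSlope τ r) := by gcongr; exact hle r hr
    _ = r ^ 3 * (κ ^ 2 * radialSlope τ r / r) := by field_simp

lemma isBigO_atTop_of_le_sq_mul_radialSlope (hτ_nonneg : ∀ r > 0, 0 ≤ τ r)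
    (hle : ∀ r > 0, τ r ≤ r ^ 2 * radialSlope τ r)
    (hslope : radialSlope τ =O[atTop] fun r => r ^ κ) : τ =O[atTop] fun r => r ^ (κ + 2) := by
  have hpos : ∀ᶠ r : ℝ in atTop, 0 < r := eventually_gt_atTop 0
  refine (IsBigO.of_bound 1 ?_).trans (isBigO_rpow_mul hpos
    (isBigO_rpow_mul hpos isBigO_id_rpow_one isBigO_id_rpow_one rfl) hslope
    (show _ = κ + 2 by ring))
  filter_upwards [hpos] with r hr
  rw [one_mul, Real.norm_of_nonneg (hτ_nonneg r hr), ← sq]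
  exact (hle r hr).trans (Real.le_norm_self _)

end RadialWeightBounds

lemma isBigO_rpow_of_isBigO_exp_neg {f : ℝ → ℝ} {N : ℝ} (hN : 0 < N) (s : ℝ)
    (hf : f =O[atTop] fun r => Real.exp (-N * r)) : f =O[atTop] fun r => r ^ s :=
  hf.trans (isLittleO_exp_neg_mul_rpow_atTop hN s).isBigO

lemma integrableOn_Ioi_mul_sq_mul_id {A ψ : ℝ → ℝ} {μ c N : ℝ} (hμ : 0 ≤ μ) (hcN : c < 2 * N)
    (hA_cont : ContinuousOn A (Ioi 0)) (hψ_cont : ContinuousOn ψ (Ioi 0))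
    (hA_zero : A =O[𝓝[>] 0] fun r => r ^ (-1 : ℝ)) (hψ_zero : ψ =O[𝓝[>] 0] fun r => r ^ μ)
    (hA_top : A =O[atTop] fun r => Real.exp (c * r))
    (hψ_top : ψ =O[atTop] fun r => Real.exp (-N * r)) :
    IntegrableOn (fun r => A r * ψ r ^ 2 * r) (Ioi 0) := by
  refine integrableOn_Ioi_of_isBigO_one_of_isBigO_exp_neg (c := N - c / 2) (by linarith)
    ((hA_cont.mul (hψ_cont.pow 2)).mul continuousOn_id) ?_ ?_
  · have hpos : ∀ᶠ r : ℝ in 𝓝[>] 0, 0 < r := self_mem_nhdsWithin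
    have := isBigO_rpow_mul hpos (isBigO_rpow_mul hpos hA_zero
      (isBigO_rpow_mul hpos hψ_zero hψ_zero rfl) rfl) isBigO_id_rpow_one
      (show _ = 2 * μ by ring)
    simpa only [sq, Real.rpow_zero] using
      this.trans (isBigO_rpow_nhdsGT_zero_of_le (s := 0) (by positivity))
  · have id_isBigO : (fun r : ℝ => r) =O[atTop] fun r => Real.exp ((N - c / 2) * r) := by
      simpa using (isLittleO_pow_exp_pos_mul_atTop 1 (show 0 < N - c / 2 by linarith)).isBigO
    refine ((hA_top.mul (hψ_top.pow 2)).mul id_isBigO).congr_right fun r => ?_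
    rw [← Real.exp_nat_mul, ← Real.exp_add, ← Real.exp_add]
    push_cast
    ring_nf

section GroupVelocity

variable {m p lam β γ c N : ℝ} {a b τ ψ : ℝ → ℝ}

lemma isBigO_add_const_nhdsGT_zero (hγ : γ ≤ 2) (ha : ∀ r > 0, HasDerivAt a (b r) r)
    (hb : b =O[𝓝[>] 0] fun r => r ^ (-γ)) (p : ℝ) :
    (fun r => a r + p) =O[𝓝[>] 0] fun r => r ^ (-1 : ℝ) := by
  have hb2 : b =O[𝓝[>] 0] fun r : ℝ => (r ^ 2)⁻¹ := by
    refine (hb.trans (isBigO_rpow_nhdsGT_zero_of_le (neg_le_neg hγ))).congr' .rfl ?_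
    filter_upwards [self_mem_nhdsWithin] with r hr
    rw [Real.rpow_neg (le_of_lt hr), Real.rpow_two]
  simp only [Real.rpow_neg_one]
  refine isBigO_inv_nhdsGT_zero_of_hasDerivAt ?_ hb2
  filter_upwards [self_mem_nhdsWithin] with r hr
  exact (ha r hr).add_const p

lemma virialFlux_derivative_le {r a b τ T v' ψ ψ' : ℝ} (hr : 0 < r) (hbτ : b * τ = r)
    (hle : τ ≤ r ^ 2 * T) (hcurv : r ^ 3 * v' ≤ 4 * m ^ 2 * τ) :
    (2 * a * b - 2 * m ^ 2 * r⁻¹ ^ 3) * τ * ψ ^ 2 + v' / 2 * ψ ^ 2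
      - 2 * (r * T - r⁻¹ * τ) * ψ' ^ 2 ≤ 2 * (a * ψ ^ 2 * r) := by
  have hv' : v' ≤ 4 * m ^ 2 * r⁻¹ ^ 3 * τ := by
    rw [inv_pow, mul_right_comm, ← div_eq_mul_inv, le_div_iff₀' (by positivity)]
    exact hcurv
  have hT : r⁻¹ * τ ≤ r * T := by
    rw [inv_mul_le_iff₀ hr]
    linarith
  have hcurv_term : 0 ≤ (4 * m ^ 2 * r⁻¹ ^ 3 * τ - v') * ψ ^ 2 :=
    mul_nonneg (sub_nonneg.mpr hv') (sq_nonneg ψ)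
  have hslope_term : 0 ≤ (r * T - r⁻¹ * τ) * ψ' ^ 2 :=
    mul_nonneg (sub_nonneg.mpr hT) (sq_nonneg ψ')
  have hmagnetic : 2 * a * b * τ * ψ ^ 2 = 2 * (a * ψ ^ 2 * r) := by rw [← hbτ]; ring
  linarith

lemma hasDerivAt_virialFlux_effectivePotential {r : ℝ} (hr : 0 < r) (ha : HasDerivAt a (b r) r)
    (hτ : ContDiffOn ℝ 3 τ (Ioi 0)) (hψ : ContDiffOn ℝ 2 ψ (Ioi 0))
    (heq : -r⁻¹ * deriv (fun s => s * deriv ψ s) r + m ^ 2 * r⁻¹ ^ 2 * ψ r + (a r + p) ^ 2 * ψ r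
      = lam * ψ r) :
    HasDerivAt (virialFlux (effectivePotential m p lam a) τ ψ)
      ((2 * (a r + p) * b r - 2 * m ^ 2 * r⁻¹ ^ 3) * τ r * ψ r ^ 2
        + deriv (radialCurvature τ) r / 2 * ψ r ^ 2
        - 2 * (r * radialSlope τ r - r⁻¹ * τ r) * deriv ψ r ^ 2) r := by
  have differentiableAt {f : ℝ → ℝ} (hf : ContDiffOn ℝ 1 f (Ioi 0)) : DifferentiableAt ℝ f r :=
    (hf.differentiableOn one_ne_zero).differentiableAt (Ioi_mem_nhds hr)
  refine hasDerivAt_virialFlux hr.ne' (hasDerivAt_effectivePotential hr.ne' ha)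
    (differentiableAt (hτ.of_le (by norm_num)))
    (differentiableAt (contDiffOn_radialSlope (hτ.of_le (by norm_num))))
    (differentiableAt (contDiffOn_radialCurvature (hτ.of_le (by norm_num))))
    (differentiableAt (hψ.of_le (by norm_num)))
    (hasDerivAt_deriv_of_eigenvalue_equation hr.ne'
      (differentiableAt (hψ.deriv_of_isOpen isOpen_Ioi (by norm_num))) heq)

lemma exists_tendsto_zero_frequently_le_virialFlux_effectivePotential
    (hτ : ContDiffOn ℝ 3 τ (Ioi 0)) (hτ_nonneg : ∀ r > 0, 0 ≤ τ r)
    (hle : ∀ r > 0, τ r ≤ r ^ 2 * radialSlope τ r)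
    (hcurv : ∀ r > 0, r ^ 3 * deriv (radialCurvature τ) r ≤ 4 * m ^ 2 * τ r) (hN : 0 < N)
    (hψ : ψ =O[atTop] fun r => Real.exp (-N * r))
    (hψ' : deriv ψ =O[atTop] fun r => Real.exp (-N * r)) :
    ∃ ρ : ℝ → ℝ, Tendsto ρ atTop (𝓝 0) ∧
      ∃ᶠ r in atTop, ρ r ≤ virialFlux (effectivePotential m p lam a) τ ψ r := by
  have hpos : ∀ᶠ r : ℝ in atTop, 0 < r := eventually_gt_atTop 0
  let κ : ℝ := 2 * |m| + 1
  have hκ : 4 * m ^ 2 ≤ κ ^ 2 := by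
    rw [← sq_abs m]
    nlinarith [abs_nonneg m]
  have hslope : radialSlope τ =O[atTop] fun r => r ^ κ :=
    isBigO_radialSlope_atTop (by positivity) hτ hτ_nonneg hle fun r hr =>
      (hcurv r hr).trans (mul_le_mul_of_nonneg_right hκ (hτ_nonneg r hr))
  have hslope_diff : DifferentiableOn ℝ (radialSlope τ) (Ioi 0) :=
    (contDiffOn_radialSlope (n := 2) (hτ.of_le (by norm_num))).differentiableOn two_ne_zero
  have hcurv_frequently : ∃ᶠ r in atTop, -1 ≤ radialCurvature τ r :=
    frequently_le_of_hasDerivAt_div_id (by norm_num)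
      (fun r hr => hasDerivAt_radialSlope (hslope_diff.differentiableAt (Ioi_mem_nhds hr)) hr.ne')
      (fun r hr => radialSlope_nonneg_of_le_sq_mul hr.ne' (hτ_nonneg r hr) (hle r hr))
  exact exists_tendsto_zero_frequently_le_virialFlux (by positivity : 0 < κ + 2)
    (.of_forall fun _ => neg_le_effectivePotential) (hpos.mono hτ_nonneg)
    (isBigO_atTop_of_le_sq_mul_radialSlope hτ_nonneg hle hslope)
    (by simpa using hslope) hcurv_frequently
    (isBigO_rpow_of_isBigO_exp_neg hN _ hψ) (isBigO_rpow_of_isBigO_exp_neg hN _ hψ')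

lemma tendsto_virialFlux_effectivePotential_id_mul_nhdsGT_zero {g : ℝ → ℝ}
    (hβ : β < 2 * |m| - 1) (hg : ContDiffOn ℝ 2 g (Ioi 0))
    (hgO : ∀ k ≤ 2, deriv^[k] g =O[𝓝[>] 0] fun r => r ^ (-β - (k : ℝ)))
    (ha : (fun r => a r + p) =O[𝓝[>] 0] fun r => r ^ (-1 : ℝ))
    (hψ : ψ =O[𝓝[>] 0] fun r => r ^ |m|) (hψ' : deriv ψ =O[𝓝[>] 0] fun r => r ^ (|m| - 1)) :
    Tendsto (virialFlux (effectivePotential m p lam a) (fun s => s * g s) ψ) (𝓝[>] 0) (𝓝 0) := by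
  have hg0 : g =O[𝓝[>] 0] fun r => r ^ (-β) := by simpa using hgO 0 (by norm_num)
  have hg1 : deriv g =O[𝓝[>] 0] fun r => r ^ (-β - 1) := by simpa using hgO 1 (by norm_num)
  have hg2 : deriv (deriv g) =O[𝓝[>] 0] fun r => r ^ (-β - 2) := by simpa using hgO 2 le_rfl
  exact tendsto_virialFlux_nhdsGT_zero hβ (isBigO_effectivePotential_nhdsGT_zero ha)
    (isBigO_rpow_mul self_mem_nhdsWithin isBigO_id_rpow_one hg0 (by ring))
    (isBigO_radialSlope_id_mul_nhdsGT_zero (hg.differentiableOn two_ne_zero) hg0 hg1)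
    (isBigO_radialCurvature_id_mul_nhdsGT_zero hg hg0 hg1 hg2) hψ hψ'

lemma integral_nonneg_of_radialWeight (hab : ∀ r > 0, HasDerivAt a (b r) r)
    (hτ : ContDiffOn ℝ 3 τ (Ioi 0)) (hτ_nonneg : ∀ r > 0, 0 ≤ τ r)
    (hbτ : ∀ r > 0, b r * τ r = r) (hle : ∀ r > 0, τ r ≤ r ^ 2 * radialSlope τ r)
    (hcurv : ∀ r > 0, r ^ 3 * deriv (radialCurvature τ) r ≤ 4 * m ^ 2 * τ r)
    (hψ : ContDiffOn ℝ 2 ψ (Ioi 0))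
    (hψ_eq : ∀ r > 0, -r⁻¹ * deriv (fun s => s * deriv ψ s) r
      + m ^ 2 * r⁻¹ ^ 2 * ψ r + (a r + p) ^ 2 * ψ r = lam * ψ r)
    (hflux : Tendsto (virialFlux (effectivePotential m p lam a) τ ψ) (𝓝[>] 0) (𝓝 0))
    (hN : 0 < N) (hψ_top : ψ =O[atTop] fun r => Real.exp (-N * r))
    (hψ'_top : deriv ψ =O[atTop] fun r => Real.exp (-N * r))
    (hint : IntegrableOn (fun r => (a r + p) * ψ r ^ 2 * r) (Ioi 0)) :
    0 ≤ 2 * ∫ r in Ioi 0, (a r + p) * ψ r ^ 2 * r := by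
  obtain ⟨ρ, hρ, hρ_le⟩ := exists_tendsto_zero_frequently_le_virialFlux_effectivePotential
    (p := p) (lam := lam) (a := a) hτ hτ_nonneg hle hcurv hN hψ_top hψ'_top
  rw [← integral_const_mul]
  simpa using sub_le_integral_Ioi_of_hasDerivAt_of_le
    (fun r hr => hasDerivAt_virialFlux_effectivePotential hr (hab r hr) hτ hψ (hψ_eq r hr))
    (fun r hr => virialFlux_derivative_le hr (hbτ r hr) (hle r hr) (hcurv r hr))
    (hint.const_mul 2) hflux hρ hρ_le

theorem group_velocity_nonneg_general
    (hb : ContDiffOn ℝ 3 b (Ioi 0)) (hb_pos : ∀ r > 0, 0 < b r) (hb_deriv : ∀ r > 0, deriv b r ≤ 0)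
    (hab : ∀ r > 0, HasDerivAt a (b r) r)
    (hc : 0 < c) (hb_top : b =O[atTop] fun r => Real.exp (c * r))
    (hγ : γ ≤ 2) (hb_zero : b =O[𝓝[>] 0] fun r => r ^ (-γ))
    (hβ : β < 2 * |m| - 1)
    (hb_inv : ∀ k ≤ 2, deriv^[k] (fun s => (b s)⁻¹) =O[𝓝[>] 0] fun r => r ^ (-β - (k : ℝ)))
    {v : ℝ → ℝ} (hτ : ∀ r, τ r = r / b r)
    (hv : ∀ r > 0, v r = r * deriv (fun s => s⁻¹ * deriv τ s) r)
    (hv_deriv : ∀ r > 0, r ^ 2 * b r * deriv v r ≤ 4 * m ^ 2)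
    (hψ : ContDiffOn ℝ 2 ψ (Ioi 0))
    (hψ_eq : ∀ r > 0, -r⁻¹ * deriv (fun s => s * deriv ψ s) r
      + m ^ 2 * r⁻¹ ^ 2 * ψ r + (a r + p) ^ 2 * ψ r = lam * ψ r)
    (hψ_zero : ψ =O[𝓝[>] 0] fun r => r ^ |m|)
    (hψ'_zero : deriv ψ =O[𝓝[>] 0] fun r => r ^ (|m| - 1))
    (hcN : c < 2 * N) (hψ_top : ψ =O[atTop] fun r => Real.exp (-N * r))
    (hψ'_top : deriv ψ =O[atTop] fun r => Real.exp (-N * r)) :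
    IntegrableOn (fun r => (a r + p) * ψ r ^ 2 * r) (Ioi 0) ∧
      0 ≤ 2 * ∫ r in Ioi 0, (a r + p) * ψ r ^ 2 * r := by
  obtain rfl : τ = fun s => s * (b s)⁻¹ := funext fun s => (hτ s).trans (div_eq_mul_inv s (b s))
  have hg : ContDiffOn ℝ 3 (fun s => (b s)⁻¹) (Ioi 0) := hb.inv fun r hr => (hb_pos r hr).ne'
  have hb_diff : ∀ r > 0, DifferentiableAt ℝ b r := fun r hr =>
    (hb.differentiableOn (by norm_num)).differentiableAt (Ioi_mem_nhds hr)
  have ha_zero := isBigO_add_const_nhdsGT_zero hγ hab hb_zero p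
  have ha_top := isBigO_exp_mul_of_hasDerivAt (f := fun r => a r + p) hc
    ((eventually_gt_atTop 0).mono fun r hr => (hab r hr).add_const p) hb_top
  have integrable := integrableOn_Ioi_mul_sq_mul_id (abs_nonneg m) hcN
    (HasDerivAt.continuousOn fun r hr => (hab r hr).add_const p) hψ.continuousOn
    ha_zero hψ_zero ha_top hψ_top
  have mul_weight : ∀ r > 0, b r * (r * (b r)⁻¹) = r := fun r hr => by
    have := hb_pos r hr
    field_simp
  have curvature_le : ∀ r > 0, r ^ 3 * deriv (radialCurvature fun s => s * (b s)⁻¹) r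
      ≤ 4 * m ^ 2 * (r * (b r)⁻¹) := fun r hr => by
    have hbr := hb_pos r hr
    have v_eq : v =ᶠ[𝓝 r] radialCurvature fun s => s * (b s)⁻¹ := by
      filter_upwards [Ioi_mem_nhds hr] with s hs using hv s hs
    calc r ^ 3 * deriv (radialCurvature fun s => s * (b s)⁻¹) r
        = r ^ 2 * b r * deriv v r * (r * (b r)⁻¹) := by rw [v_eq.deriv_eq]; field_simp
      _ ≤ 4 * m ^ 2 * (r * (b r)⁻¹) :=
          mul_le_mul_of_nonneg_right (hv_deriv r hr) (by positivity)
  exact ⟨integrable, integral_nonneg_of_radialWeight hab (contDiffOn_id.mul hg)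
    (fun r hr => (mul_pos hr (inv_pos.mpr (hb_pos r hr))).le) mul_weight
    (fun r hr => id_mul_inv_le_sq_mul_radialSlope hr.ne' (hb_diff r hr) (hb_pos r hr).ne'
      (hb_deriv r hr))
    curvature_le hψ hψ_eq
    (tendsto_virialFlux_effectivePotential_id_mul_nhdsGT_zero hβ (hg.of_le (by norm_num)) hb_inv
      ha_zero hψ_zero hψ'_zero)
    (by linarith) hψ_top hψ'_top integrable⟩

end GroupVelocity

/-- Corollary 4.4 of the paper: under the hypotheses of the group-velocity formula, if in
addition `b′(r) ≤ 0` and `r² b(r) v′(r) ≤ 4m²` for all `r > 0`, then the group velocity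
`2∫₀^∞ (a+p) ψ² r dr` is nonnegative. -/
theorem group_velocity_nonneg
    (m : ℤ) (hm : m ≠ 0)
    (b b' : ℝ → ℝ) (hbC3 : ContDiffOn ℝ 3 b (Set.Ioi 0))
    (hbpos : ∀ r > (0:ℝ), 0 < b r)
    (hb' : ∀ r > (0:ℝ), HasDerivAt b (b' r) r)
    (a : ℝ → ℝ) (hab : ∀ r > (0:ℝ), HasDerivAt a (b r) r)
    (hainf : Tendsto a atTop atTop)
    (hbexp : ∃ c > (0:ℝ), b =O[atTop] fun r => Real.exp (c * r))
    (hbzero : ∃ γ < (3/2 : ℝ), b =O[nhdsWithin 0 (Set.Ioi 0)] fun r : ℝ => r ^ (-γ))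
    (hbinv : ∃ β < 2 * |(m : ℝ)| - 1, ∃ C > (0:ℝ), ∃ δ > (0:ℝ), ∀ k ≤ 3,
      ∀ r ∈ Set.Ioo (0:ℝ) δ,
        |deriv^[k] (fun s => (b s)⁻¹) r| ≤ C * r ^ (-β - (k : ℝ)))
    (τ v : ℝ → ℝ)
    (hτ : ∀ r : ℝ, τ r = r / b r)
    (hv : ∀ r > (0:ℝ), v r = r * deriv (fun s => s⁻¹ * deriv τ s) r)
    (p lam : ℝ) (ψ : ℝ → ℝ)
    (hψC2 : ContDiffOn ℝ 2 ψ (Set.Ioi 0))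
    (hψeq : ∀ r > (0:ℝ), -r⁻¹ * deriv (fun s => s * deriv ψ s) r
        + (m : ℝ) ^ 2 * r⁻¹ ^ 2 * ψ r + (a r + p) ^ 2 * ψ r = lam * ψ r)
    (hψnorm : (∫ r in Set.Ioi (0:ℝ), (ψ r) ^ 2 * r) = 1)
    (hψzero : ψ =O[nhdsWithin 0 (Set.Ioi 0)] fun r : ℝ => r ^ (|(m : ℝ)|))
    (hψ'zero : deriv ψ =O[nhdsWithin 0 (Set.Ioi 0)] fun r : ℝ => r ^ (|(m : ℝ)| - 1))
    (hψdec : ∀ N > (0:ℝ), Tendsto (fun r => Real.exp (N * r) * ψ r) atTop (nhds 0))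
    (hψ'dec : ∀ N > (0:ℝ), Tendsto (fun r => Real.exp (N * r) * deriv ψ r) atTop (nhds 0))
    (hb'neg : ∀ r > (0:ℝ), b' r ≤ 0)
    (hvcond : ∀ r > (0:ℝ), r ^ 2 * b r * deriv v r ≤ 4 * (m : ℝ) ^ 2)
    :
    0 ≤ 2 * ∫ r in Set.Ioi (0:ℝ), (a r + p) * (ψ r) ^ 2 * r := by
  obtain ⟨c, hc, hb_top⟩ := hbexp
  obtain ⟨γ, hγ, hb_zero⟩ := hbzero
  obtain ⟨β, hβ, C, -, δ, hδ, hb_inv⟩ := hbinv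
  exact (group_velocity_nonneg_general hbC3 hbpos (fun r hr => (hb' r hr).deriv ▸ hb'neg r hr) hab
    hc hb_top (by linarith) hb_zero hβ
    (fun k hk => isBigO_nhdsGT_of_abs_le_const_mul hδ (hb_inv k (by omega))) hτ hv hvcond hψC2 hψeq
    hψzero hψ'zero (show c < 2 * c by linarith) (isBigO_exp_neg_mul_of_tendsto (hψdec c hc))
    (isBigO_exp_neg_mul_of_tendsto (hψ'dec c hc))).2
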